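/- Let j be a symmetric gauge function on ℝ^{2n}, Σ = j⁻¹(1), T > 0, and suppose that the set P := {τ > 0 : there exists a closed characteristic (τ, y) on Σ with y(t + τ/2) = −y(t) for all t} has positive infimum τ̂ > 0. Let a > τ̂/T and let φ : ℝ → ℝ be a smooth function satisfying: φ(t) ≥ 0, φ(0) = φ'(0) = 0, φ''(0) = 1, φ'(t) > 0 for t > 0, t ↦ φ'(t)/t strictly decreasing on (0,∞), and lim_{t→+∞} φ'(t)/t < τ̂/(aT); set H̃(x) = a·φ(j(x)). Then for every sufficiently small ε > 0 there exist A > 0, R > 0 and a function H̄ : ℝ^{2n} → ℝ such that: H̄(−x) = H̄(x) for all x; H̄ is C¹ on ℝ^{2n} and C³ on ℝ^{2n}∖{0}; H̄(x) = H̃(x) for all x with H̃(x) ≤ A; H̄(x) = (ε/2)|x|² for all |x| ≥ R; and the T-antiperiodic problem ẋ(t) = J∇H̄(x(t)), x(t + T/2) = −x(t) for all t, has exactly the same solutions as the T-antiperiodic problem ẋ(t) = J∇H̃(x(t)), x(t + T/2) = −x(t) for all t. -/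

import Mathlib

open Set Filter

noncomputable section

/-- `ℝ^{2n}`, written with index type `Fin n ⊕ Fin n`. -/
abbrev Esp (n : ℕ) := EuclideanSpace ℝ (Fin n ⊕ Fin n)

/-- The standard symplectic matrix `J = [[0, −I_n],[I_n, 0]]`. -/
def Jmat (n : ℕ) : Matrix (Fin n ⊕ Fin n) (Fin n ⊕ Fin n) ℝ :=
  Matrix.fromBlocks 0 (-1) 1 0

/-- `J` as a continuous linear map on `ℝ^{2n}`. -/
def Jc (n : ℕ) : Esp n →L[ℝ] Esp n :=
  LinearMap.toContinuousLinearMap (Matrix.toEuclideanLin (Jmat n))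

/-- A symmetric gauge function on `ℝ^{2n}`. -/
def IsSymGauge (n : ℕ) (j : Esp n → ℝ) : Prop :=
  Continuous j ∧ ContDiffOn ℝ 3 j {(0 : Esp n)}ᶜ ∧
  (∀ l : ℝ, 0 ≤ l → ∀ x, j (l • x) = l * j x) ∧
  (∀ x, x ≠ 0 → 0 < j x) ∧ (∀ x, j (-x) = j x)

/-- A closed characteristic `(τ, y)` on `Σ = j⁻¹(1)`. -/
def IsClosedCharacteristic (n : ℕ) (j : Esp n → ℝ) (τ : ℝ) (y : ℝ → Esp n) : Prop :=
  0 < τ ∧ ContDiff ℝ 1 y ∧ (∃ s t, y s ≠ y t) ∧ (∀ t, j (y t) = 1) ∧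
  (∀ t, HasDerivAt y (Jc n (gradient j (y t))) t) ∧ (∀ t, y (t + τ) = y t)

/-!
For a positively `1`-homogeneous `j` the field `J ∇j` is tangent to the levels of `j` and
`0`-homogeneous. Hence a `T`-antiperiodic solution of `ẋ = J ∇(φ ∘ j)` stays on a level `{j = c}`
and rescales to a closed characteristic of period `T φ'(c) / c`. As such periods are at least
`τ̂`, while `φ'(c) / c < τ̂ / T` for `c ≥ c₀`, all of these solutions lie in `{j < c₀}`, and the
same holds for any profile with derivative in `[0, φ']`. Replace `φ` beyond `c₀` by a profile `ψ`
that becomes constant, and far out in the constant region add a function of `|x|²` that turns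
`ψ ∘ j` into `(ε/2)|x|²`. If this transition is slow and `ε` is small, then the velocity is at most
`K |x|` with `K T < 4` wherever `ψ ∘ j` is constant, and an antiperiodic curve with such a velocity
vanishes. So every solution of the new system meets the region where the Hamiltonian is `ψ ∘ j`,
stays in `{j < c₀}`, and solves the old system.
-/

open Topology Function

theorem eq_zero_of_antiperiodic_of_norm_hasDerivAt_le {E : Type*} [NormedAddCommGroup E]
    [NormedSpace ℝ E] {x v : ℝ → E} {K p : ℝ} (hp : 0 < p) (hK : 0 ≤ K) (hKp : K * p < 2)
    (hx : ∀ t, HasDerivAt x (v t) t) (hv : ∀ t, ‖v t‖ ≤ K * ‖x t‖)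
    (hanti : Antiperiodic x p) (t : ℝ) : x t = 0 := by
  have hcont : Continuous fun t => ‖x t‖ :=
    (continuous_iff_continuousAt.2 fun t => (hx t).continuousAt).norm
  have hper : Periodic (fun t => ‖x t‖) p := fun t => by simp [hanti t]
  obtain ⟨s, -, hs⟩ := isCompact_Icc.exists_isMaxOn (nonempty_Icc.2 hp.le) hcont.continuousOn
  have hmax : ∀ t, ‖x t‖ ≤ ‖x s‖ := fun t => by
    obtain ⟨u, hu, htu⟩ := hper.exists_mem_Ico₀ hp t
    exact htu.trans_le (hs (Ico_subset_Icc_self hu))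
  have hjump : ‖x (s + p) - x s‖ ≤ K * ‖x s‖ * ‖s + p - s‖ :=
    convex_univ.norm_image_sub_le_of_norm_hasDerivWithin_le
      (fun t _ => (hx t).hasDerivWithinAt)
      (fun t _ => (hv t).trans (mul_le_mul_of_nonneg_left (hmax t) hK)) (mem_univ _) (mem_univ _)
  rw [hanti, show -x s - x s = (-2 : ℝ) • x s by module, norm_smul, norm_neg, Real.norm_two,
    add_sub_cancel_left, Real.norm_of_nonneg hp.le] at hjump
  have hs0 : ‖x s‖ ≤ 0 := by nlinarith [norm_nonneg (x s)]
  exact norm_le_zero_iff.1 ((hmax t).trans hs0)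

theorem eq_of_hasDerivAt_zero_of_lt {f : ℝ → ℝ} (hf : Continuous f) {b : ℝ}
    (hderiv : ∀ t, f t < b → HasDerivAt f 0 t) {t₀ : ℝ} (ht₀ : f t₀ < b) (t : ℝ) :
    f t = f t₀ := by
  have hopen : IsOpen ({t | f t < b} ∩ f ⁻¹' {f t₀}) :=
    (isOpen_lt hf continuous_const).isOpen_inter_preimage_of_fderiv_eq_zero (𝕜 := ℝ)
      (fun t ht => (hderiv t ht).differentiableAt.differentiableWithinAt)
      (fun t ht => by ext; simp [(hderiv t ht).deriv]) _
  have hlevel : {t | f t < b} ∩ f ⁻¹' {f t₀} = f ⁻¹' {f t₀} :=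
    inter_eq_right.2 fun t (ht : f t = f t₀) => show f t < b from ht ▸ ht₀
  have hclopen : IsClopen (f ⁻¹' {f t₀}) := ⟨isClosed_singleton.preimage hf, hlevel ▸ hopen⟩
  have huniv : f ⁻¹' {f t₀} = univ := hclopen.eq_univ ⟨t₀, rfl⟩
  exact huniv.ge (mem_univ t)

theorem hasGradientAt_comp_norm_sq {E : Type*} [NormedAddCommGroup E] [InnerProductSpace ℝ E]
    [CompleteSpace E] {g : ℝ → ℝ} {g' : ℝ} {x : E} (hg : HasDerivAt g g' (‖x‖ ^ 2)) :
    HasGradientAt (fun z : E => g (‖z‖ ^ 2)) ((2 * g') • x) x := by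
  rw [hasGradientAt_iff_hasFDerivAt]
  refine (hg.comp_hasFDerivAt x (hasStrictFDerivAt_norm_sq x).hasFDerivAt).congr_fderiv ?_
  ext v
  simp only [smul_apply, innerSL_apply_apply, smul_eq_mul, map_smul,
    InnerProductSpace.toDual_apply_apply]
  ring

theorem exists_norm_le_of_smul_invariant {E F : Type*} [NormedAddCommGroup E] [NormedSpace ℝ E]
    [ProperSpace E] [SeminormedAddCommGroup F] {f : E → F} (hf : ContinuousOn f {0}ᶜ)
    (hsmul : ∀ l : ℝ, 0 < l → ∀ x, x ≠ 0 → f (l • x) = f x) :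
    ∃ C > 0, ∀ x, x ≠ 0 → ‖f x‖ ≤ C := by
  have hsphere : Metric.sphere (0 : E) 1 ⊆ {0}ᶜ := fun x hx =>
    Metric.ne_of_mem_sphere hx one_ne_zero
  obtain ⟨C, hC0, hC⟩ := ((isCompact_sphere (0 : E) 1).image_of_continuousOn
    (hf.mono hsphere)).isBounded.exists_pos_norm_le
  refine ⟨C, hC0, fun x hx => ?_⟩
  rw [← hsmul ‖x‖⁻¹ (inv_pos.2 (norm_pos_iff.2 hx)) x hx]
  exact hC _ (mem_image_of_mem f (by simp [norm_smul, hx]))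

section Gauge

/-- Gauge functions on a normed space, not necessarily even, and only required to be `C¹`
away from the origin: the generality in which the dynamics of `J ∇j` is studied here. -/
structure IsGauge {E : Type*} [NormedAddCommGroup E] [NormedSpace ℝ E] (j : E → ℝ) : Prop where
  continuous : Continuous j
  contDiffOn : ContDiffOn ℝ 1 j {0}ᶜ
  map_smul : ∀ l : ℝ, 0 ≤ l → ∀ x, j (l • x) = l * j x
  pos : ∀ x, x ≠ 0 → 0 < j x

namespace IsGauge

section NormedSpace

variable {E : Type*} [NormedAddCommGroup E] [NormedSpace ℝ E] {j : E → ℝ}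

theorem map_zero (hj : IsGauge j) : j 0 = 0 := by
  simpa using hj.map_smul 0 le_rfl 0

theorem nonneg (hj : IsGauge j) (x : E) : 0 ≤ j x := by
  rcases eq_or_ne x 0 with rfl | hx
  exacts [hj.map_zero.ge, (hj.pos x hx).le]

theorem ne_zero_of_pos (hj : IsGauge j) {x : E} (hx : 0 < j x) : x ≠ 0 := by
  rintro rfl
  exact hx.ne' hj.map_zero

theorem differentiableAt (hj : IsGauge j) {x : E} (hx : x ≠ 0) : DifferentiableAt ℝ j x :=
  (hj.contDiffOn.contDiffAt (isOpen_compl_singleton.mem_nhds hx)).differentiableAt one_ne_zero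

variable [FiniteDimensional ℝ E]

theorem exists_le_mul_norm (hj : IsGauge j) : ∃ C, ∀ x, j x ≤ C * ‖x‖ := by
  obtain ⟨C, -, hC⟩ := exists_norm_le_of_smul_invariant (f := fun x => j x / ‖x‖)
    (hj.continuous.continuousOn.div continuous_norm.continuousOn fun x hx => norm_ne_zero_iff.2 hx)
    (fun l hl x _ => by
      rw [hj.map_smul l hl.le, norm_smul, Real.norm_of_nonneg hl.le,
        mul_div_mul_left _ _ hl.ne'])
  refine ⟨C, fun x => ?_⟩
  rcases eq_or_ne x 0 with rfl | hx
  · simp [hj.map_zero]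
  · exact (div_le_iff₀ (norm_pos_iff.2 hx)).1 ((le_abs_self _).trans (hC x hx))

theorem isBounded_setOf_lt (hj : IsGauge j) (b : ℝ) : Bornology.IsBounded {x | j x < b} := by
  obtain ⟨C, hC0, hC⟩ := exists_norm_le_of_smul_invariant (f := fun x => ‖x‖ / j x)
    (continuous_norm.continuousOn.div hj.continuous.continuousOn fun x hx => (hj.pos x hx).ne')
    (fun l hl x _ => by
      rw [hj.map_smul l hl.le, norm_smul, Real.norm_of_nonneg hl.le,
        mul_div_mul_left _ _ hl.ne'])
  refine isBounded_iff_forall_norm_le.2 ⟨C * b, fun x (hx : j x < b) => ?_⟩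
  rcases eq_or_ne x 0 with rfl | hx0
  · rw [hj.map_zero] at hx
    simpa using (mul_pos hC0 hx).le
  · calc ‖x‖ ≤ C * j x :=
        (div_le_iff₀ (hj.pos x hx0)).1 ((le_abs_self _).trans (hC x hx0))
      _ ≤ C * b := by gcongr

end NormedSpace

section CompleteSpace

variable {E : Type*} [NormedAddCommGroup E] [InnerProductSpace ℝ E] [CompleteSpace E] {j : E → ℝ}

theorem gradient_smul (hj : IsGauge j) {x : E} (hx : x ≠ 0) {l : ℝ} (hl : 0 < l) :
    gradient j (l • x) = gradient j x := by
  have hscale : fderiv ℝ (fun z => j (l • z)) x = l • fderiv ℝ j (l • x) :=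
    fderiv_comp_smul l
  have hhom : fderiv ℝ (fun z => j (l • z)) x = l • fderiv ℝ j x := by
    rw [funext (hj.map_smul l hl.le), fderiv_const_mul (hj.differentiableAt hx)]
  simp only [gradient, smul_right_injective _ hl.ne' (hscale.symm.trans hhom)]

theorem continuousOn_gradient (hj : IsGauge j) : ContinuousOn (gradient j) {0}ᶜ :=
  (InnerProductSpace.toDual ℝ E).symm.continuous.comp_continuousOn
    (hj.contDiffOn.continuousOn_fderiv_of_isOpen isOpen_compl_singleton le_rfl)

end CompleteSpace

variable {E : Type*} [NormedAddCommGroup E] [InnerProductSpace ℝ E] [FiniteDimensional ℝ E]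
  {j : E → ℝ}

theorem exists_norm_gradient_le (hj : IsGauge j) : ∃ C, ∀ x, ‖gradient j x‖ ≤ C := by
  obtain ⟨C, -, hC⟩ := exists_norm_le_of_smul_invariant hj.continuousOn_gradient
    fun l hl x hx => hj.gradient_smul hx hl
  refine ⟨max C ‖gradient j 0‖, fun x => ?_⟩
  rcases eq_or_ne x 0 with rfl | hx
  exacts [le_max_right _ _, (hC x hx).trans (le_max_left _ _)]

section Comp

variable {ψ : ℝ → ℝ}

theorem hasGradientAt_comp (hj : IsGauge j) (hψ0 : deriv ψ 0 = 0) {x : E}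
    (hψ : DifferentiableAt ℝ ψ (j x)) :
    HasGradientAt (fun z => ψ (j z)) (deriv ψ (j x) • gradient j x) x := by
  rw [hasGradientAt_iff_hasFDerivAt, LinearIsometryEquiv.map_smul, toDual_gradient]
  rcases eq_or_ne x 0 with rfl | hx
  · obtain ⟨C, hC⟩ := hj.exists_le_mul_norm
    have hjO : (fun z => j z - j 0) =O[𝓝 0] fun z : E => z - 0 :=
      .of_bound C <| .of_forall fun z => by
        simpa [hj.map_zero, abs_of_nonneg (hj.nonneg z)] using hC z
    have hψo := ((hasDerivAt_iff_isLittleO.1 hψ.hasDerivAt).comp_tendsto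
      (hj.continuous.tendsto 0)).trans_isBigO hjO
    rw [hasFDerivAt_iff_isLittleO]
    simpa [Function.comp_def, hj.map_zero, hψ0] using hψo
  · exact hψ.hasDerivAt.comp_hasFDerivAt x (hj.differentiableAt hx).hasFDerivAt

theorem contDiff_one_comp (hj : IsGauge j) (hψ : ContDiff ℝ 1 ψ) (hψ0 : deriv ψ 0 = 0) :
    ContDiff ℝ 1 fun z => ψ (j z) := by
  have hderiv : Continuous fun x => deriv ψ (j x) :=
    (hψ.continuous_deriv le_rfl).comp hj.continuous
  have hgrad : Continuous fun x => deriv ψ (j x) • gradient j x := by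
    refine continuous_iff_continuousAt.2 fun x => ?_
    rcases eq_or_ne x 0 with rfl | hx
    · obtain ⟨C, hC⟩ := hj.exists_norm_gradient_le
      have hlim : Tendsto (fun x => deriv ψ (j x)) (𝓝 0) (𝓝 0) := by
        simpa [hj.map_zero, hψ0] using hderiv.tendsto (0 : E)
      simpa [ContinuousAt, hj.map_zero, hψ0] using
        hlim.zero_smul_isBoundedUnder_le (isBoundedUnder_of ⟨C, hC⟩)
    · exact hderiv.continuousAt.smul
        (hj.continuousOn_gradient.continuousAt (isOpen_compl_singleton.mem_nhds hx))
  exact contDiff_one_iff_hasFDerivAt.2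
    ⟨_, (InnerProductSpace.toDual ℝ E).continuous.comp hgrad, fun x =>
      (hj.hasGradientAt_comp hψ0 (hψ.differentiable one_ne_zero _)).hasFDerivAt⟩

end Comp

theorem eq_of_inner_gradient_eq_zero (hj : IsGauge j) {x v : ℝ → E}
    (hx : ∀ t, HasDerivAt x (v t) t) {b : ℝ}
    (hinner : ∀ t, j (x t) < b → inner ℝ (gradient j (x t)) (v t) = 0) {t₀ : ℝ}
    (ht₀ : j (x t₀) < b) (t : ℝ) : j (x t) = j (x t₀) := by
  have hxc : Continuous x := continuous_iff_continuousAt.2 fun t => (hx t).continuousAt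
  have hb : 0 ≤ b := (hj.nonneg _).trans ht₀.le
  -- Unlike `j`, the function `j ^ 2` is differentiable also at the origin.
  have hderiv : ∀ t, j (x t) ^ 2 < b ^ 2 → HasDerivAt (fun t => j (x t) ^ 2) 0 t := fun t ht => by
    have hsq := (hj.hasGradientAt_comp (ψ := fun s => s ^ 2) (by simp)
      (differentiableAt_id.pow 2)).hasFDerivAt.comp_hasDerivAt t (hx t)
    rwa [InnerProductSpace.toDual_apply_apply, inner_smul_left,
      hinner t (lt_of_pow_lt_pow_left₀ 2 hb ht), mul_zero] at hsq
  exact (sq_eq_sq₀ (hj.nonneg _) (hj.nonneg _)).1 <|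
    eq_of_hasDerivAt_zero_of_lt ((hj.continuous.comp hxc).pow 2) hderiv
      (pow_lt_pow_left₀ ht₀ (hj.nonneg _) two_ne_zero) t

end IsGauge

end Gauge

section Dynamics

variable {E : Type*} [NormedAddCommGroup E] [InnerProductSpace ℝ E] [FiniteDimensional ℝ E]
  {J : E →L[ℝ] E} {j : E → ℝ} {T : ℝ}

/-- Closed characteristics `(τ, y)` on `j⁻¹(1)` with `y(t + τ/2) = -y(t)`, for the field `J ∇j` of
an arbitrary operator `J`. That `y` is `C¹`, non-constant and `τ`-periodic is automatic, see
`IsAntiperiodicCharacteristic.isClosedCharacteristic`. -/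
structure IsAntiperiodicCharacteristic (J : E →L[ℝ] E) (j : E → ℝ) (τ : ℝ) (y : ℝ → E) : Prop where
  pos : 0 < τ
  level_eq : ∀ t, j (y t) = 1
  hasDerivAt : ∀ t, HasDerivAt y (J (gradient j (y t))) t
  antiperiodic : Antiperiodic y (τ / 2)

/-- Solutions of the `T`-antiperiodic problem `ẋ(t) = J ∇H(x(t))`, `x(t + T/2) = -x(t)`. -/
def IsAntiperiodicSolution (J : E →L[ℝ] E) (H : E → ℝ) (T : ℝ) (x : ℝ → E) : Prop :=
  (∀ t, HasDerivAt x (J (gradient H (x t))) t) ∧ Antiperiodic x (T / 2)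

theorem IsGauge.isAntiperiodicCharacteristic_rescale (hj : IsGauge j) {x : ℝ → E} {k c : ℝ}
    (hT : 0 < T) (hk : 0 < k) (hc : 0 < c) (hlevel : ∀ t, j (x t) = c)
    (hx : ∀ t, HasDerivAt x (k • J (gradient j (x t))) t) (hanti : Antiperiodic x (T / 2)) :
    IsAntiperiodicCharacteristic J j (T * (k / c)) fun t => c⁻¹ • x (c / k * t) where
  pos := by positivity
  level_eq t := by rw [hj.map_smul _ (inv_pos.2 hc).le, hlevel, inv_mul_cancel₀ hc.ne']
  hasDerivAt t := by
    have hne : x (c / k * t) ≠ 0 := hj.ne_zero_of_pos ((hlevel _).symm ▸ hc)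
    have hderiv := ((hx (c / k * t)).scomp t ((hasDerivAt_id t).const_mul (c / k))).const_smul c⁻¹
    rw [smul_smul, smul_smul, show c⁻¹ * (c / k * 1) * k = 1 by field_simp, one_smul] at hderiv
    rw [hj.gradient_smul hne (inv_pos.2 hc)]
    exact hderiv
  antiperiodic t := by
    have htime : c / k * (t + T * (k / c) / 2) = c / k * t + T / 2 := by field_simp
    simp only [htime, hanti (c / k * t), smul_neg]

namespace IsAntiperiodicSolution

theorem congr_of_eqOn {H H' : E → ℝ} {U : Set E} (hU : IsOpen U) (hH : EqOn H H' U) {x : ℝ → E}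
    (hxU : ∀ t, x t ∈ U) (hx : IsAntiperiodicSolution J H T x) :
    IsAntiperiodicSolution J H' T x :=
  ⟨fun t => (hH.eventuallyEq_of_mem (hU.mem_nhds (hxU t))).gradient_eq ▸ hx.1 t, hx.2⟩

variable {H : E → ℝ} {ψ : ℝ → ℝ} {b : ℝ} {x : ℝ → E}

theorem hasDerivAt_of_eqOn_comp (hj : IsGauge j) (hψ : Differentiable ℝ ψ) (hψ0 : deriv ψ 0 = 0)
    (hH : EqOn H (fun z => ψ (j z)) {z | j z < b}) (hx : IsAntiperiodicSolution J H T x) {t : ℝ}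
    (ht : j (x t) < b) :
    HasDerivAt x (deriv ψ (j (x t)) • J (gradient j (x t))) t := by
  have hgrad : gradient H (x t) = deriv ψ (j (x t)) • gradient j (x t) :=
    (hH.eventuallyEq_of_mem
      ((isOpen_lt hj.continuous continuous_const).mem_nhds ht)).gradient_eq.trans
      (hj.hasGradientAt_comp hψ0 (hψ _)).gradient
  rw [← map_smul, ← hgrad]
  exact hx.1 t

theorem level_eq (hj : IsGauge j) (hJ : ∀ v, inner ℝ v (J v) = 0) (hψ : Differentiable ℝ ψ)
    (hψ0 : deriv ψ 0 = 0) (hH : EqOn H (fun z => ψ (j z)) {z | j z < b})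
    (hx : IsAntiperiodicSolution J H T x) {t₀ : ℝ} (ht₀ : j (x t₀) < b) (t : ℝ) :
    j (x t) = j (x t₀) := by
  refine hj.eq_of_inner_gradient_eq_zero hx.1 (fun t ht => ?_) ht₀ t
  rw [(hx.1 t).unique (hx.hasDerivAt_of_eqOn_comp hj hψ hψ0 hH ht), inner_smul_right, hJ, mul_zero]

theorem le_mul_deriv_div_level (hj : IsGauge j) (hJ : ∀ v, inner ℝ v (J v) = 0)
    (hψ : Differentiable ℝ ψ) (hψ0 : deriv ψ 0 = 0) (hψnonneg : ∀ t, 0 < t → 0 ≤ deriv ψ t)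
    (hH : EqOn H (fun z => ψ (j z)) {z | j z < b}) (hT : 0 < T) {τ₀ : ℝ}
    (hτ₀ : ∀ τ y, IsAntiperiodicCharacteristic J j τ y → τ₀ ≤ τ)
    (hx : IsAntiperiodicSolution J H T x) {t₀ : ℝ} (hpos : 0 < j (x t₀)) (ht₀ : j (x t₀) < b) :
    τ₀ ≤ T * (deriv ψ (j (x t₀)) / j (x t₀)) := by
  have hlevel := hx.level_eq hj hJ hψ hψ0 hH ht₀
  have hderiv : ∀ t, HasDerivAt x (deriv ψ (j (x t₀)) • J (gradient j (x t))) t := fun t =>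
    hlevel t ▸ hx.hasDerivAt_of_eqOn_comp hj hψ hψ0 hH ((hlevel t).trans_lt ht₀)
  have hψpos : 0 < deriv ψ (j (x t₀)) := by
    refine (hψnonneg _ hpos).lt_of_ne fun hzero => hj.ne_zero_of_pos hpos ?_
    exact eq_zero_of_antiperiodic_of_norm_hasDerivAt_le (half_pos hT) le_rfl (by simp) hderiv
      (fun t => by simp [← hzero]) hx.2 t₀
  exact hτ₀ _ _ (hj.isAntiperiodicCharacteristic_rescale hT hψpos hpos hlevel hderiv hx.2)

theorem level_lt (hj : IsGauge j) (hJ : ∀ v, inner ℝ v (J v) = 0)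
    (hψ : Differentiable ℝ ψ) (hψ0 : deriv ψ 0 = 0) (hψnonneg : ∀ t, 0 < t → 0 ≤ deriv ψ t)
    (hH : EqOn H (fun z => ψ (j z)) {z | j z < b}) (hT : 0 < T) {τ₀ : ℝ}
    (hτ₀ : ∀ τ y, IsAntiperiodicCharacteristic J j τ y → τ₀ ≤ τ) {c : ℝ} (hc : 0 < c)
    (hslope : ∀ t, c ≤ t → deriv ψ t / t < τ₀ / T) (hx : IsAntiperiodicSolution J H T x) {t₀ : ℝ}
    (ht₀ : j (x t₀) < b) (t : ℝ) : j (x t) < c := by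
  rw [hx.level_eq hj hJ hψ hψ0 hH ht₀ t]
  by_contra! hcj
  have hperiod := hx.le_mul_deriv_div_level hj hJ hψ hψ0 hψnonneg hH hT hτ₀ (hc.trans_le hcj) ht₀
  exact hperiod.not_gt ((lt_div_iff₀' hT).1 (hslope _ hcj))

end IsAntiperiodicSolution

end Dynamics

section Truncation

variable {φ : ℝ → ℝ} {c : ℝ}

/-- The truncation of a profile `φ` at `c`: it agrees with `φ` up to `c`, is constant from `c + 1`
on, and its derivative is a multiple of `φ'` by a factor in `[0, 1]`. -/
def truncate (φ : ℝ → ℝ) (c t : ℝ) : ℝ :=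
  φ c + ∫ s in c..t, (1 - Real.smoothTransition (s - c)) * deriv φ s

theorem continuous_truncate_integrand (hφ : Continuous (deriv φ)) :
    Continuous fun s => (1 - Real.smoothTransition (s - c)) * deriv φ s :=
  (continuous_const.sub (Real.smoothTransition.continuous.comp
    (continuous_id.sub continuous_const))).mul hφ

theorem hasDerivAt_truncate (hφ : Continuous (deriv φ)) (t : ℝ) :
    HasDerivAt (truncate φ c) ((1 - Real.smoothTransition (t - c)) * deriv φ t) t :=
  ((continuous_truncate_integrand hφ).integral_hasStrictDerivAt c t).hasDerivAt.const_add (φ c)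

theorem deriv_truncate (hφ : Continuous (deriv φ)) (t : ℝ) :
    deriv (truncate φ c) t = (1 - Real.smoothTransition (t - c)) * deriv φ t :=
  (hasDerivAt_truncate hφ t).deriv

theorem deriv_truncate_nonneg (hφ : Continuous (deriv φ)) {t : ℝ} (ht : 0 ≤ deriv φ t) :
    0 ≤ deriv (truncate φ c) t := by
  rw [deriv_truncate hφ]
  exact mul_nonneg (sub_nonneg.2 (Real.smoothTransition.le_one _)) ht

theorem deriv_truncate_le (hφ : Continuous (deriv φ)) {t : ℝ} (ht : 0 ≤ deriv φ t) :
    deriv (truncate φ c) t ≤ deriv φ t := by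
  rw [deriv_truncate hφ]
  exact mul_le_of_le_one_left ht (sub_le_self _ (Real.smoothTransition.nonneg _))

theorem contDiff_truncate {r : ℕ∞} (hr : 1 ≤ r) (hφ : ContDiff ℝ r φ) :
    ContDiff ℝ r (truncate φ c) := by
  obtain ⟨m, rfl⟩ : ∃ m, r = m + 1 := ⟨r - 1, (tsub_add_cancel_of_le hr).symm⟩
  have hφ' : ContDiff ℝ m (deriv φ) := (contDiff_succ_iff_deriv.1 hφ).2.2
  refine (contDiff_succ_iff_deriv (n := m)).2
    ⟨fun t => (hasDerivAt_truncate hφ'.continuous t).differentiableAt, by simp, ?_⟩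
  rw [funext (deriv_truncate hφ'.continuous)]
  exact (contDiff_const.sub (Real.smoothTransition.contDiff.comp
    (contDiff_id.sub contDiff_const))).mul hφ'

theorem truncate_of_le (hφ : ContDiff ℝ 1 φ) {t : ℝ} (ht : t ≤ c) : truncate φ c t = φ t := by
  have hcongr : ∫ s in c..t, (1 - Real.smoothTransition (s - c)) * deriv φ s =
      ∫ s in c..t, deriv φ s := by
    refine intervalIntegral.integral_congr fun s hs => ?_
    rw [uIcc_of_ge ht] at hs
    simp [Real.smoothTransition.zero_of_nonpos (sub_nonpos.2 hs.2)]
  rw [truncate, hcongr, intervalIntegral.integral_deriv_eq_sub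
    (fun s _ => hφ.differentiable one_ne_zero s)
    ((hφ.continuous_deriv le_rfl).intervalIntegrable _ _), add_sub_cancel]

theorem truncate_of_ge (hφ : Continuous (deriv φ)) {t : ℝ} (ht : c + 1 ≤ t) :
    truncate φ c t = truncate φ c (c + 1) := by
  have hint :=
    (continuous_truncate_integrand (c := c) hφ).intervalIntegrable (μ := MeasureTheory.volume)
  have hzero : ∫ s in (c + 1)..t, (1 - Real.smoothTransition (s - c)) * deriv φ s = 0 := by
    refine intervalIntegral.integral_zero_ae (.of_forall fun s hs => ?_)
    rw [uIoc_of_le ht] at hs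
    simp [Real.smoothTransition.one_of_one_le (le_sub_iff_add_le'.2 hs.1.le)]
  rw [truncate, ← intervalIntegral.integral_add_adjacent_intervals (hint c (c + 1)) (hint _ t),
    hzero, add_zero, truncate]

end Truncation

section Ramp

open Real (smoothTransition)

theorem deriv_smoothTransition_of_notMem_Icc {u : ℝ} (hu : u ∉ Icc (0 : ℝ) 1) :
    deriv smoothTransition u = 0 := by
  rcases not_and_or.1 hu with hu | hu
  · have : smoothTransition =ᶠ[𝓝 u] fun _ => 0 := by
      filter_upwards [Iio_mem_nhds (not_le.1 hu)] with s hs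
        using Real.smoothTransition.zero_of_nonpos (le_of_lt hs)
    simp [this.deriv_eq]
  · have : smoothTransition =ᶠ[𝓝 u] fun _ => 1 := by
      filter_upwards [Ioi_mem_nhds (not_le.1 hu)] with s hs
        using Real.smoothTransition.one_of_one_le (le_of_lt hs)
    simp [this.deriv_eq]

theorem exists_abs_mul_deriv_smoothTransition_le {f : ℝ → ℝ} (hf : Continuous f) :
    ∃ C, ∀ u, |f u * deriv smoothTransition u| ≤ C := by
  have hcont : Continuous (deriv smoothTransition) :=
    (Real.smoothTransition.contDiff (n := 1)).continuous_deriv le_rfl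
  exact (hf.mul hcont).bounded_above_of_compact_support <|
    (HasCompactSupport.intro isCompact_Icc fun _ => deriv_smoothTransition_of_notMem_Icc).mul_left

variable {m b M s : ℝ}

/-- The function that vanishes up to `M`, equals the affine function `m * s - b` from `2 * M` on,
and is interpolated on the scale `M` in between, so that its slope is small for small `m` and
large `M`. -/
def affineRamp (m b M s : ℝ) : ℝ :=
  smoothTransition (s / M - 1) * (m * s - b)

theorem affineRamp_of_le (hM : 0 < M) (hs : s ≤ M) : affineRamp m b M s = 0 := by
  rw [affineRamp, Real.smoothTransition.zero_of_nonpos (sub_nonpos.2 ((div_le_one hM).2 hs)),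
    zero_mul]

theorem affineRamp_of_ge (hM : 0 < M) (hs : 2 * M ≤ s) : affineRamp m b M s = m * s - b := by
  have hone : 1 ≤ s / M - 1 := by
    rw [le_sub_iff_add_le, one_add_one_eq_two, le_div_iff₀ hM]
    exact hs
  rw [affineRamp, Real.smoothTransition.one_of_one_le hone, one_mul]

theorem contDiff_affineRamp {r : ℕ∞} : ContDiff ℝ r (affineRamp m b M) :=
  (Real.smoothTransition.contDiff.comp ((contDiff_id.div_const M).sub contDiff_const)).mul
    ((contDiff_const.mul contDiff_id).sub contDiff_const)

theorem hasDerivAt_affineRamp (m b M s : ℝ) :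
    HasDerivAt (affineRamp m b M)
      (deriv smoothTransition (s / M - 1) / M * (m * s - b) + smoothTransition (s / M - 1) * m)
      s := by
  have hθ : Differentiable ℝ smoothTransition :=
    (Real.smoothTransition.contDiff (n := 1)).differentiable one_ne_zero
  have harg : HasDerivAt (fun s : ℝ => s / M - 1) (1 / M) s :=
    ((hasDerivAt_id s).div_const M).sub_const 1
  have haffine : HasDerivAt (fun s : ℝ => m * s - b) m s := by
    simpa using ((hasDerivAt_id s).const_mul m).sub_const b
  rw [← mul_one_div]
  exact (((hθ _).hasDerivAt.comp s harg).mul haffine)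

theorem exists_abs_deriv_affineRamp_le :
    ∃ C > 0, ∀ m b M s : ℝ, 0 < M → |deriv (affineRamp m b M) s| ≤ C * (|m| + |b| / M) := by
  obtain ⟨C₀, hC₀⟩ := exists_abs_mul_deriv_smoothTransition_le (f := fun _ => 1) continuous_const
  obtain ⟨C₁, hC₁⟩ := exists_abs_mul_deriv_smoothTransition_le (f := fun u => u + 1)
    (continuous_id.add continuous_const)
  have hC₀0 : 0 ≤ C₀ := (abs_nonneg _).trans (hC₀ 0)
  have hC₁0 : 0 ≤ C₁ := (abs_nonneg _).trans (hC₁ 0)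
  refine ⟨C₀ + C₁ + 1, by positivity, fun m b M s hM => ?_⟩
  set u := s / M - 1
  have hsplit : deriv (affineRamp m b M) s = (u + 1) * deriv smoothTransition u * m -
      1 * deriv smoothTransition u * (b / M) + smoothTransition u * m := by
    rw [(hasDerivAt_affineRamp m b M s).deriv, show u + 1 = s / M by simp [u]]
    ring
  have hθ : |smoothTransition u| ≤ 1 :=
    (abs_of_nonneg (Real.smoothTransition.nonneg u)).trans_le (Real.smoothTransition.le_one u)
  calc |deriv (affineRamp m b M) s|
      ≤ |(u + 1) * deriv smoothTransition u| * |m| + |1 * deriv smoothTransition u| * (|b| / M)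
        + |smoothTransition u| * |m| := by
        rw [hsplit, ← abs_mul, ← abs_mul, ← abs_of_pos hM, ← abs_div, ← abs_mul, abs_of_pos hM]
        exact (abs_add_le _ _).trans (by gcongr; exact abs_sub _ _)
    _ ≤ C₁ * |m| + C₀ * (|b| / M) + 1 * |m| := by gcongr <;> apply_rules
    _ ≤ (C₀ + C₁ + 1) * (|m| + |b| / M) := by
        have : 0 ≤ C₀ * |m| + (C₁ + 1) * (|b| / M) := by positivity
        linarith

theorem exists_eventually_abs_deriv_affineRamp_le {κ : ℝ} (hκ : 0 < κ) :
    ∃ m₀ > 0, ∀ m, |m| ≤ m₀ → ∀ b, ∀ᶠ M in atTop, ∀ s, |deriv (affineRamp m b M) s| ≤ κ := by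
  obtain ⟨C, hC0, hC⟩ := exists_abs_deriv_affineRamp_le
  refine ⟨κ / C / 2, by positivity, fun m hm b => ?_⟩
  have hlim : Tendsto (fun M : ℝ => |b| / M) atTop (𝓝 0) := tendsto_const_nhds.div_atTop tendsto_id
  filter_upwards [eventually_gt_atTop 0,
    hlim.eventually_le_const (show 0 < κ / C / 2 by positivity)] with M hM hbM s
  calc |deriv (affineRamp m b M) s| ≤ C * (|m| + |b| / M) := hC m b M s hM
    _ ≤ C * (κ / C / 2 + κ / C / 2) := by gcongr
    _ = κ := by field_simp; ring

end Ramp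

section Modification

variable {E : Type*} [NormedAddCommGroup E]

/-- The Hamiltonian `H̄`: `φ ∘ j` with `φ` truncated at `c`, plus a ramp in `|z|²` whose constant
term cancels the value at which the truncated profile stabilizes. -/
def modifiedHamiltonian (j : E → ℝ) (φ : ℝ → ℝ) (c m M : ℝ) (z : E) : ℝ :=
  truncate φ c (j z) + affineRamp m (truncate φ c (c + 1)) M (‖z‖ ^ 2)

variable {j : E → ℝ} {φ : ℝ → ℝ} {c m M : ℝ}

theorem modifiedHamiltonian_neg (hsymm : ∀ x, j (-x) = j x) (z : E) :
    modifiedHamiltonian j φ c m M (-z) = modifiedHamiltonian j φ c m M z := by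
  simp only [modifiedHamiltonian, hsymm, norm_neg]

theorem modifiedHamiltonian_of_norm_sq_le (hM : 0 < M) {z : E} (hz : ‖z‖ ^ 2 ≤ M) :
    modifiedHamiltonian j φ c m M z = truncate φ c (j z) := by
  rw [modifiedHamiltonian, affineRamp_of_le hM hz, add_zero]

theorem modifiedHamiltonian_of_level_ge (hφ : Continuous (deriv φ)) {z : E} (hz : c + 1 ≤ j z) :
    modifiedHamiltonian j φ c m M z =
      truncate φ c (c + 1) + affineRamp m (truncate φ c (c + 1)) M (‖z‖ ^ 2) := by
  rw [modifiedHamiltonian, truncate_of_ge hφ hz]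

theorem modifiedHamiltonian_eq_mul_norm_sq (hφ : Continuous (deriv φ)) (hM : 0 < M) {z : E}
    (hjz : c + 1 ≤ j z) (hz : 2 * M ≤ ‖z‖ ^ 2) :
    modifiedHamiltonian j φ c m M z = m * ‖z‖ ^ 2 := by
  rw [modifiedHamiltonian_of_level_ge hφ hjz, affineRamp_of_ge hM hz, add_sub_cancel]

variable [InnerProductSpace ℝ E]

theorem contDiffOn_modifiedHamiltonian {r : ℕ∞} (hr : 1 ≤ r) (hφ : ContDiff ℝ r φ) {U : Set E}
    (hj : ContDiffOn ℝ r j U) : ContDiffOn ℝ r (modifiedHamiltonian j φ c m M) U :=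
  ((contDiff_truncate hr hφ).comp_contDiffOn hj).add
    (contDiff_affineRamp.comp (contDiff_norm_sq ℝ)).contDiffOn

variable [FiniteDimensional ℝ E] {J : E →L[ℝ] E} {T : ℝ} {x : ℝ → E}

theorem contDiff_one_modifiedHamiltonian (hj : IsGauge j) (hφ : ContDiff ℝ 1 φ)
    (hφ'0 : deriv φ 0 = 0) : ContDiff ℝ 1 (modifiedHamiltonian j φ c m M) :=
  (hj.contDiff_one_comp (contDiff_truncate le_rfl hφ)
    (by rw [deriv_truncate (hφ.continuous_deriv le_rfl), hφ'0, mul_zero])).add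
    (contDiff_affineRamp.comp (contDiff_norm_sq ℝ))

theorem gradient_modifiedHamiltonian_of_level_gt (hj : Continuous j) (hφ : Continuous (deriv φ))
    {z : E} (hz : c + 1 < j z) :
    gradient (modifiedHamiltonian j φ c m M) z =
      (2 * deriv (affineRamp m (truncate φ c (c + 1)) M) (‖z‖ ^ 2)) • z := by
  have hlocal : modifiedHamiltonian j φ c m M =ᶠ[𝓝 z] fun z =>
      truncate φ c (c + 1) + affineRamp m (truncate φ c (c + 1)) M (‖z‖ ^ 2) := by
    filter_upwards [(isOpen_lt continuous_const hj).mem_nhds hz] with w hw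
      using modifiedHamiltonian_of_level_ge hφ (le_of_lt hw)
  have hramp : Differentiable ℝ (affineRamp m (truncate φ c (c + 1)) M) :=
    (contDiff_affineRamp (r := 1)).differentiable one_ne_zero
  rw [hlocal.gradient_eq]
  exact (hasGradientAt_comp_norm_sq ((hramp _).hasDerivAt.const_add _)).gradient

theorem exists_level_le_of_modifiedHamiltonian (hj : IsGauge j) (hφ : Continuous (deriv φ))
    (hc : 0 < c) (hT : 0 < T) {κ : ℝ} (hκT : ‖J‖ * (2 * κ) * (T / 2) < 2)
    (hramp : ∀ s, |deriv (affineRamp m (truncate φ c (c + 1)) M) s| ≤ κ)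
    (hx : IsAntiperiodicSolution J (modifiedHamiltonian j φ c m M) T x) :
    ∃ t, j (x t) ≤ c + 1 := by
  by_contra! hfar
  have hκ : 0 ≤ κ := (abs_nonneg _).trans (hramp 0)
  have hgrowth : ∀ t, ‖J (gradient (modifiedHamiltonian j φ c m M) (x t))‖ ≤
      ‖J‖ * (2 * κ) * ‖x t‖ := fun t => by
    rw [gradient_modifiedHamiltonian_of_level_gt hj.continuous hφ (hfar t), mul_assoc]
    refine J.le_opNorm_of_le ?_
    rw [norm_smul, norm_mul, Real.norm_two, Real.norm_eq_abs]
    gcongr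
    exact hramp _
  have hzero : x 0 = 0 := eq_zero_of_antiperiodic_of_norm_hasDerivAt_le (half_pos hT)
    (by positivity) hκT hx.1 hgrowth hx.2 0
  have := hfar 0
  rw [hzero, hj.map_zero] at this
  linarith

theorem isAntiperiodicSolution_modifiedHamiltonian_iff (hj : IsGauge j)
    (hJ : ∀ v, inner ℝ v (J v) = 0) (hT : 0 < T) {τ₀ : ℝ}
    (hτ₀ : ∀ τ y, IsAntiperiodicCharacteristic J j τ y → τ₀ ≤ τ) (hφ : ContDiff ℝ 1 φ)
    (hφ'0 : deriv φ 0 = 0) (hφ' : ∀ t, 0 < t → 0 ≤ deriv φ t) (hc : 0 < c)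
    (hslope : ∀ t, c ≤ t → deriv φ t / t < τ₀ / T) (hM : 0 < M)
    (hjM : ∀ z, j z < c + 2 → ‖z‖ ^ 2 ≤ M) {κ : ℝ} (hκT : ‖J‖ * (2 * κ) * (T / 2) < 2)
    (hramp : ∀ s, |deriv (affineRamp m (truncate φ c (c + 1)) M) s| ≤ κ) :
    IsAntiperiodicSolution J (modifiedHamiltonian j φ c m M) T x ↔
      IsAntiperiodicSolution J (fun z => φ (j z)) T x := by
  have hφc : Continuous (deriv φ) := hφ.continuous_deriv le_rfl
  have hopen : IsOpen {z | j z < c} := isOpen_lt hj.continuous continuous_const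
  have hH : EqOn (modifiedHamiltonian j φ c m M) (fun z => truncate φ c (j z))
      {z | j z < c + 2} := fun z hz => modifiedHamiltonian_of_norm_sq_le hM (hjM z hz)
  have hHφ : EqOn (modifiedHamiltonian j φ c m M) (fun z => φ (j z)) {z | j z < c} :=
    fun z (hz : j z < c) => (hH (show j z < c + 2 by linarith)).trans (truncate_of_le hφ hz.le)
  constructor
  · intro hx
    obtain ⟨t₀, ht₀⟩ := exists_level_le_of_modifiedHamiltonian hj hφc hc hT hκT hramp hx
    have hslope' : ∀ t, c ≤ t → deriv (truncate φ c) t / t < τ₀ / T := fun t ht =>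
      have htpos := hc.trans_le ht
      (div_le_div_of_nonneg_right (deriv_truncate_le hφc (hφ' t htpos)) htpos.le).trans_lt
        (hslope t ht)
    refine hx.congr_of_eqOn hopen hHφ <| hx.level_lt hj hJ
      (fun t => (hasDerivAt_truncate hφc t).differentiableAt) ?_
      (fun t ht => deriv_truncate_nonneg hφc (hφ' t ht)) hH hT hτ₀ hc hslope'
      (show j (x t₀) < c + 2 by linarith)
    rw [deriv_truncate hφc, hφ'0, mul_zero]
  · intro hx
    exact hx.congr_of_eqOn hopen hHφ.symm <| hx.level_lt hj hJ (hφ.differentiable one_ne_zero)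
      hφ'0 hφ' (eqOn_refl _ _) hT hτ₀ hc hslope (lt_add_one (j (x 0)))

theorem hamiltonian_modification_general (hj : IsGauge j) (hsymm : ∀ x, j (-x) = j x)
    {r : ℕ∞} (hr : 1 ≤ r) (hjr : ContDiffOn ℝ r j {0}ᶜ) (hJ : ∀ v, inner ℝ v (J v) = 0)
    (hT : 0 < T) {τ₀ : ℝ} (hτ₀ : ∀ τ y, IsAntiperiodicCharacteristic J j τ y → τ₀ ≤ τ)
    (hφ : ContDiff ℝ r φ) (hφ0 : 0 ≤ φ 0) (hφ'0 : deriv φ 0 = 0)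
    (hφpos : ∀ t, 0 < t → 0 < deriv φ t)
    (hφlim : ∀ᶠ t in atTop, deriv φ t / t < τ₀ / T) :
    ∃ ε₀ : ℝ, 0 < ε₀ ∧ ∀ ε : ℝ, 0 < ε → ε ≤ ε₀ →
      ∃ (A R : ℝ) (Hbar : E → ℝ), 0 < A ∧ 0 < R ∧
        (∀ x, Hbar (-x) = Hbar x) ∧
        ContDiff ℝ 1 Hbar ∧ ContDiffOn ℝ r Hbar {0}ᶜ ∧
        (∀ x, φ (j x) ≤ A → Hbar x = φ (j x)) ∧
        (∀ x, R ≤ ‖x‖ → Hbar x = ε / 2 * ‖x‖ ^ 2) ∧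
        (∀ x : ℝ → E, IsAntiperiodicSolution J Hbar T x ↔
          IsAntiperiodicSolution J (fun z => φ (j z)) T x) := by
  have hφ1 : ContDiff ℝ 1 φ := hφ.of_le (mod_cast hr)
  have hφc : Continuous (deriv φ) := hφ1.continuous_deriv le_rfl
  obtain ⟨c, hslope, hc⟩ :=
    ((eventually_forall_ge_atTop.2 hφlim).and (eventually_gt_atTop 0)).exists
  obtain ⟨ρ, hρ⟩ := isBounded_iff_forall_norm_le.1 (hj.isBounded_setOf_lt (c + 2))
  set κ : ℝ := 1 / ((‖J‖ + 1) * T) with hκ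
  have hκ0 : 0 < κ := by positivity
  have hκT : ‖J‖ * (2 * κ) * (T / 2) < 2 := by
    have : ‖J‖ * (2 * κ) * (T / 2) = ‖J‖ / (‖J‖ + 1) := by rw [hκ]; field_simp
    rw [this, div_lt_iff₀ (by positivity)]
    linarith [norm_nonneg J]
  obtain ⟨m₀, hm₀, hramp⟩ := exists_eventually_abs_deriv_affineRamp_le hκ0
  refine ⟨m₀, hm₀, fun ε hε hεm₀ => ?_⟩
  obtain ⟨M, hrampM, hρM, hM⟩ := ((hramp (ε / 2) (by rw [abs_of_pos (half_pos hε)]; linarith)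
    (truncate φ c (c + 1))).and ((eventually_ge_atTop (ρ ^ 2)).and (eventually_ge_atTop 1))).exists
  have hM0 : 0 < M := by linarith
  have hjM : ∀ z, j z < c + 2 → ‖z‖ ^ 2 ≤ M := fun z hz =>
    (pow_le_pow_left₀ (norm_nonneg z) (hρ z hz) 2).trans hρM
  have hmono : StrictMonoOn φ (Ici 0) :=
    strictMonoOn_of_deriv_pos (convex_Ici 0) hφ.continuous.continuousOn
      fun t ht => hφpos t (by rwa [interior_Ici] at ht)
  refine ⟨φ c, 2 * M, modifiedHamiltonian j φ c (ε / 2) M,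
    hφ0.trans_lt (hmono self_mem_Ici hc.le hc), by positivity, modifiedHamiltonian_neg hsymm,
    contDiff_one_modifiedHamiltonian hj hφ1 hφ'0, contDiffOn_modifiedHamiltonian hr hφ hjr,
    fun x hx => ?_, fun x hx => ?_, fun x => ?_⟩
  · have hxc : j x ≤ c := (hmono.le_iff_le (hj.nonneg x) hc.le).1 hx
    rw [modifiedHamiltonian_of_norm_sq_le hM0 (hjM x (by linarith)), truncate_of_le hφ1 hxc]
  · have hxM : 2 * M ≤ ‖x‖ ^ 2 := by nlinarith
    have hxc : c + 2 ≤ j x := not_lt.1 fun h => by linarith [hjM x h]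
    exact modifiedHamiltonian_eq_mul_norm_sq hφc hM0 (by linarith) hxM
  · exact isAntiperiodicSolution_modifiedHamiltonian_iff hj hJ hT hτ₀ hφ1 hφ'0
      (fun t ht => (hφpos t ht).le) hc hslope hM0 hjM hκT hrampM

end Modification

section Symplectic

variable {n : ℕ} {j : Esp n → ℝ}

theorem Jc_apply_inl (v : Esp n) (i : Fin n) : Jc n v (Sum.inl i) = -v (Sum.inr i) := by
  simp [Jc, Jmat, Matrix.toLpLin_apply, Matrix.mulVec, dotProduct, Matrix.one_apply]

theorem Jc_apply_inr (v : Esp n) (i : Fin n) : Jc n v (Sum.inr i) = v (Sum.inl i) := by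
  simp [Jc, Jmat, Matrix.toLpLin_apply, Matrix.mulVec, dotProduct, Matrix.one_apply]

theorem inner_Jc_self (v : Esp n) : inner ℝ v (Jc n v) = 0 := by
  simp [PiLp.inner_apply, Fintype.sum_sum_type, Jc_apply_inl, Jc_apply_inr, mul_comm]

theorem IsSymGauge.isGauge (hj : IsSymGauge n j) : IsGauge j :=
  ⟨hj.1, hj.2.1.of_le (by norm_num), hj.2.2.1, hj.2.2.2.1⟩

theorem IsAntiperiodicCharacteristic.isClosedCharacteristic (hj : IsGauge j) {τ : ℝ}
    {y : ℝ → Esp n} (hy : IsAntiperiodicCharacteristic (Jc n) j τ y) :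
    IsClosedCharacteristic n j τ y := by
  have hne : ∀ t, y t ≠ 0 := fun t => hj.ne_zero_of_pos (by rw [hy.level_eq]; exact one_pos)
  have hyc : Continuous y := continuous_iff_continuousAt.2 fun t => (hy.hasDerivAt t).continuousAt
  have hC1 : ContDiff ℝ 1 y := by
    refine contDiff_one_iff_deriv.2 ⟨fun t => (hy.hasDerivAt t).differentiableAt, ?_⟩
    rw [funext fun t => (hy.hasDerivAt t).deriv]
    exact (Jc n).continuous.comp (hj.continuousOn_gradient.comp_continuous hyc hne)
  have hnonconst : y (0 + τ / 2) ≠ y 0 := by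
    rw [hy.antiperiodic]
    intro h
    refine hne 0 (PiLp.ext fun i => neg_eq_self.1 ?_)
    exact congrArg (fun z : Esp n => z i) h
  have hper : Periodic y τ := by simpa [mul_div_cancel₀] using hy.antiperiodic.periodic_two_mul
  exact ⟨hy.pos, hC1, ⟨_, _, hnonconst⟩, hy.level_eq, hy.hasDerivAt, hper⟩

end Symplectic

/-- Proposition 2.4: modification of `H̃ = a·φ∘j` to an even Hamiltonian `H̄` which agrees
with `H̃` on the sublevel set `{H̃ ≤ A}`, is quadratic `(ε/2)|x|²` at infinity, and has
exactly the same `T`-antiperiodic solutions. -/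
theorem hamiltonian_modification (n : ℕ) (hn : 0 < n)
    (j : Esp n → ℝ) (hj : IsSymGauge n j)
    (T : ℝ) (hT : 0 < T)
    (τhat : ℝ)
    (hglb : IsGLB {τ : ℝ | ∃ y : ℝ → Esp n,
      IsClosedCharacteristic n j τ y ∧ ∀ t, y (t + τ / 2) = -y t} τhat)
    (hτhat : 0 < τhat)
    (a : ℝ) (ha : τhat / T < a)
    (φ : ℝ → ℝ) (hφsmooth : ContDiff ℝ (⊤ : ℕ∞) φ)
    (hφnn : ∀ t, 0 ≤ φ t) (hφ0 : φ 0 = 0) (hφ'0 : deriv φ 0 = 0)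
    (hφ''0 : deriv (deriv φ) 0 = 1)
    (hφpos : ∀ t, 0 < t → 0 < deriv φ t)
    (hφanti : StrictAntiOn (fun t => deriv φ t / t) (Ioi 0))
    (hφlim : ∃ δ : ℝ, Tendsto (fun t => deriv φ t / t) atTop (nhds δ) ∧ δ < τhat / (a * T)) :
    ∃ ε₀ : ℝ, 0 < ε₀ ∧ ∀ ε : ℝ, 0 < ε → ε ≤ ε₀ →
      ∃ (A R : ℝ) (Hbar : Esp n → ℝ), 0 < A ∧ 0 < R ∧
        (∀ x, Hbar (-x) = Hbar x) ∧
        ContDiff ℝ 1 Hbar ∧ ContDiffOn ℝ 3 Hbar {(0 : Esp n)}ᶜ ∧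
        (∀ x, a * φ (j x) ≤ A → Hbar x = a * φ (j x)) ∧
        (∀ x : Esp n, R ≤ ‖x‖ → Hbar x = ε / 2 * ‖x‖ ^ 2) ∧
        (∀ x : ℝ → Esp n,
          ((∀ t, HasDerivAt x (Jc n (gradient Hbar (x t))) t) ∧
            (∀ t, x (t + T / 2) = -x t)) ↔
          ((∀ t, HasDerivAt x (Jc n (gradient (fun z => a * φ (j z)) (x t))) t) ∧
            (∀ t, x (t + T / 2) = -x t))) := by
  have ha0 : 0 < a := (div_pos hτhat hT).trans ha
  obtain ⟨δ, hδ, hδlt⟩ := hφlim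
  have hderiv : ∀ t, deriv (fun t => a * φ t) t = a * deriv φ t := fun t =>
    deriv_const_mul_field a
  have hslope : ∀ᶠ t in atTop, deriv (fun t => a * φ t) t / t < τhat / T := by
    filter_upwards [hδ.eventually_lt_const hδlt] with t ht
    rw [hderiv, mul_div_assoc]
    calc a * (deriv φ t / t) < a * (τhat / (a * T)) := by gcongr
      _ = τhat / T := by field_simp
  exact hamiltonian_modification_general (r := 3) hj.isGauge hj.2.2.2.2 (by norm_num) hj.2.1
    inner_Jc_self hT
    (fun τ y hy => hglb.1 ⟨y, hy.isClosedCharacteristic hj.isGauge, hy.antiperiodic⟩)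
    (contDiff_const.mul (contDiff_infty.1 hφsmooth 3)) (mul_nonneg ha0.le (hφnn 0))
    (by rw [hderiv, hφ'0, mul_zero])
    (fun t ht => by rw [hderiv]; exact mul_pos ha0 (hφpos t ht)) hslope

end
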